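/- Let V₁, …, Vₙ be finite-dimensional vector spaces, t ∈ V₁ ⊗ ⋯ ⊗ Vₙ, and A ⊆ {1,…,n}. Suppose A is a union of c subsets S₁, …, S_c, and for each i the flattening rank of t with respect to S_i is at most r. Then the flattening rank of t with respect to A is at most r^c. -/

import Mathlib

/-- The flattening of a tensor `t ∈ V₁ ⊗ ⋯ ⊗ Vₙ` (given in coordinates, `V_i = 𝕜^{d i}`)
with respect to a subset `S` of the factors: the matrix of the linear map
`(⊗_{l∈S} V_l)* → ⊗_{l∉S} V_l` obtained by contraction with `t`. -/
def flattening {𝕜 : Type*} [Field 𝕜] {ι : Type*} [Fintype ι] [DecidableEq ι]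
    (d : ι → ℕ) (S : Finset ι) (t : (∀ i, Fin (d i)) → 𝕜) :
    Matrix (∀ i : {i // i ∈ S}, Fin (d i.1)) (∀ i : {i // i ∉ S}, Fin (d i.1)) 𝕜 :=
  fun a b => t fun i => if h : i ∈ S then a ⟨i, h⟩ else b ⟨i, h⟩

/-- The flattening rank of a tensor with respect to a subset `S` of the factors. -/
noncomputable def flatteningRank {𝕜 : Type*} [Field 𝕜] {ι : Type*} [Fintype ι] [DecidableEq ι]
    (d : ι → ℕ) (S : Finset ι) (t : (∀ i, Fin (d i)) → 𝕜) : ℕ :=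
  (flattening d S t).rank

/-!
Fixing the coordinates of `t` in the factors of `S` is a linear operation on tensors, and the
flattening rank of `t` with respect to `S` is the dimension of the span of the slices of `t`
obtained this way. Slicing along `S ∪ T` is slicing along `T` and then along `S`, and for disjoint
`S` and `T` the two operations commute. Hence, if a family of `S`-slices and a family of `T`-slices
of `t` span all of them, then slicing each member of one family by the indices of the other spans
the `(S ∪ T)`-slices, and the flattening rank is submultiplicative.
-/

section CommutingFamilies

open Module Submodule

variable {K E α β : Type*} [DivisionRing K] [AddCommGroup E] [Module K E]

theorem span_range_comp_apply_le_of_commute {κ μ : Type*} {L : α → End K E} {M : β → End K E}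
    (hLM : ∀ a b, Commute (L a) (M b)) {v : E} {p : κ → α} {q : μ → β}
    (hp : ∀ a, L a v ∈ span K (Set.range fun k => L (p k) v))
    (hq : ∀ b, M b v ∈ span K (Set.range fun l => M (q l) v)) :
    span K (Set.range fun ab : α × β => L ab.1 (M ab.2 v)) ≤
      span K (Set.range fun kl : κ × μ => L (p kl.1) (M (q kl.2) v)) := by
  have hcomm (a : α) (b : β) : L a (M b v) = M b (L a v) := LinearMap.congr_fun (hLM a b) v
  have hright (k : κ) (b : β) : L (p k) (M b v) ∈
      span K (Set.range fun kl : κ × μ => L (p kl.1) (M (q kl.2) v)) := by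
    refine map_span_le (L (p k)) _ _ |>.2 ?_ (mem_map_of_mem (hq b))
    rintro _ ⟨l, rfl⟩
    exact subset_span ⟨(k, l), rfl⟩
  rw [span_le]
  rintro _ ⟨⟨a, b⟩, rfl⟩
  dsimp only
  rw [hcomm]
  refine map_span_le (M b) _ _ |>.2 ?_ (mem_map_of_mem (hp a))
  rintro _ ⟨k, rfl⟩
  exact hcomm (p k) b ▸ hright k b

theorem finrank_span_range_comp_apply_le_mul_of_commute [FiniteDimensional K E]
    {L : α → End K E} {M : β → End K E} (hLM : ∀ a b, Commute (L a) (M b)) (v : E) :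
    finrank K (span K (Set.range fun ab : α × β => L ab.1 (M ab.2 v))) ≤
      finrank K (span K (Set.range fun a => L a v)) *
        finrank K (span K (Set.range fun b => M b v)) := by
  obtain ⟨κ, p, -, hp_span, hp_indep⟩ := exists_linearIndependent' K fun a => L a v
  obtain ⟨μ, q, -, hq_span, hq_indep⟩ := exists_linearIndependent' K fun b => M b v
  have : Finite κ := hp_indep.finite
  have := Fintype.ofFinite κ
  have : Finite μ := hq_indep.finite
  have := Fintype.ofFinite μ
  have hle := span_range_comp_apply_le_of_commute hLM (v := v) (p := p) (q := q)
    (fun a => hp_span.ge (subset_span ⟨a, rfl⟩)) (fun b => hq_span.ge (subset_span ⟨b, rfl⟩))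
  calc
    _ ≤ finrank K (span K (Set.range fun kl : κ × μ => L (p kl.1) (M (q kl.2) v))) :=
      finrank_mono hle
    _ ≤ Fintype.card (κ × μ) := finrank_range_le_card _
    _ = _ := by
      rw [Fintype.card_prod, ← hp_span, ← hq_span, finrank_span_eq_card hp_indep,
        finrank_span_eq_card hq_indep]

end CommutingFamilies

section TensorSlice

variable {R ι : Type*} [Semiring R] [DecidableEq ι] {X : ι → Type*}

/-- The slice of a tensor obtained by fixing its coordinates in `S` to be those of `x`. It is
encoded as a tensor with the same factors that is constant in the coordinates in `S`, so that
slicing is an endomorphism and slices along different sets can be composed. -/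
def tensorSlice (R : Type*) [Semiring R] (S : Finset ι) (x : ∀ i, X i) :
    Module.End R ((∀ i, X i) → R) :=
  LinearMap.funLeft R R fun f => S.piecewise x f

theorem tensorSlice_apply (S : Finset ι) (x : ∀ i, X i) (t : (∀ i, X i) → R) (f : ∀ i, X i) :
    tensorSlice R S x t f = t (S.piecewise x f) :=
  rfl

theorem tensorSlice_union (S T : Finset ι) (x : ∀ i, X i) (t : (∀ i, X i) → R) :
    tensorSlice R (S ∪ T) x t = tensorSlice R S x (tensorSlice R T x t) := by
  ext f
  simp only [tensorSlice_apply]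
  congr 1
  ext i
  by_cases hS : i ∈ S <;> by_cases hT : i ∈ T <;> simp [hS, hT]

theorem commute_tensorSlice {S T : Finset ι} (hST : Disjoint S T) (x y : ∀ i, X i) :
    Commute (tensorSlice R S x) (tensorSlice R T y) := by
  refine LinearMap.ext fun t => funext fun f => ?_
  simp only [Module.End.mul_apply, tensorSlice_apply]
  congr 1
  ext i
  by_cases hS : i ∈ S
  · simp [hS, Finset.disjoint_left.1 hST hS]
  · by_cases hT : i ∈ T <;> simp [hS, hT]

end TensorSlice

section FlatteningRank

open Module Submodule

variable {𝕜 ι : Type*} [Field 𝕜] [Fintype ι] [DecidableEq ι] (d : ι → ℕ)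

theorem span_range_tensorSlice_eq_map_span_row [∀ i, Nonempty (Fin (d i))] (S : Finset ι)
    (t : (∀ i, Fin (d i)) → 𝕜) :
    span 𝕜 (Set.range fun x => tensorSlice 𝕜 S x t) =
      (span 𝕜 (Set.range (flattening d S t).row)).map
        (LinearMap.funLeft 𝕜 𝕜 fun f (i : {i // i ∉ S}) => f i) := by
  have hsurj : Function.Surjective fun (x : ∀ i, Fin (d i)) (i : {i // i ∈ S}) => x i :=
    Subtype.surjective_restrict (· ∈ S)
  rw [map_span, ← Set.range_comp, ← hsurj.range_comp]
  rfl

theorem flatteningRank_eq_finrank_span_tensorSlice (S : Finset ι) (t : (∀ i, Fin (d i)) → 𝕜) :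
    flatteningRank d S t = finrank 𝕜 (span 𝕜 (Set.range fun x => tensorSlice 𝕜 S x t)) := by
  cases isEmpty_or_nonempty (∀ i, Fin (d i)) with
  | inl hempty =>
    have hzero : flattening d S t = 0 := by
      ext a b
      exact hempty.elim fun i => if h : i ∈ S then a ⟨i, h⟩ else b ⟨i, h⟩
    rw [flatteningRank, hzero, Matrix.rank_zero, Set.range_eq_empty, span_empty, finrank_bot]
  | inr hne =>
    have : ∀ i, Nonempty (Fin (d i)) := Classical.nonempty_pi.1 hne
    have hsurj : Function.Surjective fun (f : ∀ i, Fin (d i)) (i : {i // i ∉ S}) => f i :=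
      Subtype.surjective_restrict (· ∉ S)
    rw [span_range_tensorSlice_eq_map_span_row, flatteningRank, Matrix.rank_eq_finrank_span_row]
    exact (equivMapOfInjective _
      (LinearMap.funLeft_injective_of_surjective 𝕜 𝕜 _ hsurj) _).finrank_eq

theorem flatteningRank_union_le_mul {S T : Finset ι} (hST : Disjoint S T)
    (t : (∀ i, Fin (d i)) → 𝕜) :
    flatteningRank d (S ∪ T) t ≤ flatteningRank d S t * flatteningRank d T t := by
  simp only [flatteningRank_eq_finrank_span_tensorSlice]
  refine le_trans (finrank_mono (span_mono ?_))
    (finrank_span_range_comp_apply_le_mul_of_commute (commute_tensorSlice hST) t)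
  rintro _ ⟨x, rfl⟩
  exact ⟨(x, x), (tensorSlice_union S T x t).symm⟩

theorem flatteningRank_empty_le_one (t : (∀ i, Fin (d i)) → 𝕜) : flatteningRank d ∅ t ≤ 1 := by
  simpa [flatteningRank] using (flattening d ∅ t).rank_le_card_height

theorem flatteningRank_biUnion_le_prod {κ : Type*} {s : Finset κ} {S : κ → Finset ι}
    (hdisj : (s : Set κ).PairwiseDisjoint S) (t : (∀ i, Fin (d i)) → 𝕜) :
    flatteningRank d (s.biUnion S) t ≤ ∏ a ∈ s, flatteningRank d (S a) t := by
  classical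
  induction s using Finset.induction_on with
  | empty => simpa using flatteningRank_empty_le_one d t
  | insert a s ha ih =>
    rw [Finset.coe_insert, Set.pairwiseDisjoint_insert_of_notMem (Finset.mem_coe.not.2 ha)] at hdisj
    have hunion : Disjoint (S a) (s.biUnion S) := (Finset.disjoint_biUnion_right ..).2 hdisj.2
    rw [Finset.biUnion_insert, Finset.prod_insert ha]
    exact (flatteningRank_union_le_mul d hunion t).trans (Nat.mul_le_mul_left _ (ih hdisj.1))

end FlatteningRank

theorem stmt_7 {𝕜 : Type*} [Field 𝕜] (n : ℕ) (d : Fin n → ℕ)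
    (t : (∀ i, Fin (d i)) → 𝕜) (A : Finset (Fin n)) (r c : ℕ)
    (S : Fin c → Finset (Fin n))
    (hdisj : Pairwise fun a b => Disjoint (S a) (S b))
    (hunion : Finset.univ.biUnion S = A)
    (hrk : ∀ a, flatteningRank d (S a) t ≤ r) :
    flatteningRank d A t ≤ r ^ c := by
  calc
    flatteningRank d A t = flatteningRank d (Finset.univ.biUnion S) t := by rw [hunion]
    _ ≤ ∏ a, flatteningRank d (S a) t :=
      flatteningRank_biUnion_le_prod d (hdisj.set_pairwise _) t
    _ ≤ r ^ Finset.univ.card := Finset.prod_le_pow_card _ _ _ fun a _ => hrk a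
    _ = r ^ c := by rw [Finset.card_fin]
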